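/- Let f : ℂ → ℂ be complex-differentiable on the open unit disk 𝔻 = {z ∈ ℂ : |z| < 1} and suppose M := sup_{0 < r < 1} ((1/(2π)) ∫₀^{2π} |f(r e^{iφ})|² dφ)^{1/2} is finite. Then (1/π) ∫_𝔻 |f(z)|⁴ dA(z) = M⁴ if and only if there exist c₁, c₂ ∈ ℂ with |c₂| < 1 such that f(z) = c₁/(1 − c₂ z) for every z ∈ 𝔻. (Here dA denotes planar Lebesgue measure on 𝔻.) -/

import Mathlib

open Real Set MeasureTheory

/-!
Write `f = ∑ aₙ zⁿ`. By Parseval on circles, `M² = ∑ |aₙ|²`; integrating Parseval for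
`f² = ∑ bₙ zⁿ` over the radius gives `(1/π) ∫ |f|⁴ = ∑ |bₙ|² / (n + 1)`. Since `bₙ` is the sum of
the `n + 1` products `aₖ aₗ` with `k + l = n`, the Cauchy–Schwarz inequality bounds
`|bₙ|² / (n + 1)` by `∑ |aₖ aₗ|²`, and these bounds add up to `M⁴`. Equality therefore means that
`aₖ aₗ` depends only on `k + l`, i.e. that `aₙ` is a geometric sequence.
-/

section SumsOfSquares

variable {ι E : Type*} [NormedAddCommGroup E] [InnerProductSpace ℝ E]

lemma sum_sum_norm_sub_sq (s : Finset ι) (x : ι → E) :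
    ∑ i ∈ s, ∑ j ∈ s, ‖x i - x j‖ ^ 2 =
      2 * (s.card * ∑ i ∈ s, ‖x i‖ ^ 2 - ‖∑ i ∈ s, x i‖ ^ 2) := by
  have norm_sum_sq : ‖∑ i ∈ s, x i‖ ^ 2 = ∑ i ∈ s, ∑ j ∈ s, inner ℝ (x i) (x j) := by
    simp_rw [← real_inner_self_eq_norm_sq, sum_inner, inner_sum]
  simp only [norm_sum_sq, norm_sub_sq_real, Finset.sum_add_distrib, Finset.sum_sub_distrib,
    Finset.sum_const, nsmul_eq_mul, ← Finset.mul_sum]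
  ring

lemma norm_sum_sq_le_card_mul_sum_norm_sq (s : Finset ι) (x : ι → E) :
    ‖∑ i ∈ s, x i‖ ^ 2 ≤ s.card * ∑ i ∈ s, ‖x i‖ ^ 2 := by
  have nonneg : 0 ≤ ∑ i ∈ s, ∑ j ∈ s, ‖x i - x j‖ ^ 2 := by positivity
  linarith [sum_sum_norm_sub_sq s x]

lemma norm_sum_sq_eq_card_mul_sum_norm_sq_iff (s : Finset ι) (x : ι → E) :
    ‖∑ i ∈ s, x i‖ ^ 2 = s.card * ∑ i ∈ s, ‖x i‖ ^ 2 ↔ ∀ i ∈ s, ∀ j ∈ s, x i = x j := by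
  calc ‖∑ i ∈ s, x i‖ ^ 2 = s.card * ∑ i ∈ s, ‖x i‖ ^ 2
      ↔ ∑ i ∈ s, ∑ j ∈ s, ‖x i - x j‖ ^ 2 = 0 := by
        rw [sum_sum_norm_sub_sq]
        constructor <;> intro h <;> linarith
    _ ↔ ∀ i ∈ s, ∑ j ∈ s, ‖x i - x j‖ ^ 2 = 0 :=
        Finset.sum_eq_zero_iff_of_nonneg fun _ _ ↦ by positivity
    _ ↔ ∀ i ∈ s, ∀ j ∈ s, x i = x j := by
        refine forall₂_congr fun i _ ↦ ?_
        rw [Finset.sum_eq_zero_iff_of_nonneg fun _ _ ↦ by positivity]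
        simp [sub_eq_zero]

end SumsOfSquares

section InfiniteSums

variable {ι : Type*}

lemma hasSum_eq_iff_of_le {u v : ι → ℝ} {s t : ℝ} (huv : ∀ i, u i ≤ v i) (hu : HasSum u s)
    (hv : HasSum v t) : s = t ↔ ∀ i, u i = v i := by
  constructor
  · rintro rfl
    have hsub : HasSum (fun i ↦ v i - u i) 0 := by simpa using hv.sub hu
    rw [hasSum_zero_iff_of_nonneg fun i ↦ sub_nonneg.2 (huv i)] at hsub
    exact fun i ↦ (sub_eq_zero.1 (congrFun hsub i)).symm
  · intro h
    rw [← funext h] at hv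
    exact hu.unique hv

lemma hasSum_of_isLUB_range_of_hasSum_mul_pow {s : ι → ℝ} {e : ι → ℕ} {I : Ioo (0 : ℝ) 1 → ℝ}
    {L : ℝ} (hs : ∀ i, 0 ≤ s i) (hI : ∀ r : Ioo (0 : ℝ) 1, HasSum (fun i ↦ s i * r ^ e i) (I r))
    (hL : IsLUB (range I) L) : HasSum s L := by
  have sum_le (t : Finset ι) : ∑ i ∈ t, s i ≤ L := by
    have hcont : Continuous fun r : ℝ ↦ ∑ i ∈ t, s i * r ^ e i := by fun_prop
    have hlim : Filter.Tendsto (fun r : ℝ ↦ ∑ i ∈ t, s i * r ^ e i) (nhdsWithin 1 (Iio 1))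
        (nhds (∑ i ∈ t, s i)) := by
      simpa using (hcont.tendsto 1).mono_left (nhdsWithin_le_nhds (s := Iio 1))
    refine le_of_tendsto hlim ?_
    filter_upwards [Ioo_mem_nhdsLT (zero_lt_one' ℝ)] with r hr
    have term_nonneg (i : ι) : 0 ≤ s i * r ^ e i := mul_nonneg (hs i) (pow_nonneg hr.1.le _)
    exact (sum_le_hasSum t (fun i _ ↦ term_nonneg i) (hI ⟨r, hr⟩)).trans
      (hL.1 (mem_range_self _))
  have summable : Summable s := summable_of_sum_le hs sum_le
  have le_tsum : L ≤ ∑' i, s i := by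
    refine hL.2 ?_
    rintro _ ⟨r, rfl⟩
    exact hasSum_le (fun i ↦ mul_le_of_le_one_right (hs i) (pow_le_one₀ r.2.1.le r.2.2.le))
      (hI r) summable.hasSum
  rw [le_antisymm le_tsum (summable.tsum_le_of_sum_le sum_le)]
  exact summable.hasSum

lemma isLUB_range_of_isLUB_range_sqrt [Nonempty ι] {I : ι → ℝ} {M : ℝ} (hI : ∀ i, 0 ≤ I i)
    (hM : IsLUB (range fun i ↦ √(I i)) M) : IsLUB (range I) (M ^ 2) := by
  have sqrt_le (i : ι) : √(I i) ≤ M := hM.1 (mem_range_self i)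
  obtain ⟨i₀⟩ := ‹Nonempty ι›
  have hM₀ : 0 ≤ M := (sqrt_nonneg _).trans (sqrt_le i₀)
  constructor
  · rintro _ ⟨i, rfl⟩
    exact (sqrt_le_left hM₀).1 (sqrt_le i)
  · intro B hB
    have le_B (i : ι) : I i ≤ B := hB (mem_range_self i)
    have hMB : M ≤ √B := hM.2 (by rintro _ ⟨i, rfl⟩; exact sqrt_le_sqrt (le_B i))
    exact (le_sqrt hM₀ ((hI i₀).trans (le_B i₀))).1 hMB

end InfiniteSums

open Finset.HasAntidiagonal (antidiagonal mem_antidiagonal)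

/-- The Cauchy product of two sequences, i.e. the coefficient sequence of the product of the power
series with coefficient sequences `a` and `b`. -/
def cauchyProduct {A : Type*} [Semiring A] (a b : ℕ → A) (n : ℕ) : A :=
  ∑ p ∈ antidiagonal n, a p.1 * b p.2

lemma hasSum_cauchyProduct {A : Type*} [NormedRing A] [CompleteSpace A] {u v : ℕ → A} {s t : A}
    (hu : HasSum u s) (hv : HasSum v t) (hu' : Summable fun n ↦ ‖u n‖)
    (hv' : Summable fun n ↦ ‖v n‖) : HasSum (cauchyProduct u v) (s * t) := by
  have hsum := (summable_norm_sum_mul_antidiagonal_of_summable_norm hu' hv').of_norm.hasSum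
  rwa [← tsum_mul_tsum_eq_tsum_sum_antidiagonal_of_summable_norm hu' hv', hu.tsum_eq,
    hv.tsum_eq] at hsum

lemma norm_sq_cauchyProduct_div_le (a b : ℕ → ℂ) (n : ℕ) :
    ‖cauchyProduct a b n‖ ^ 2 / (n + 1) ≤
      cauchyProduct (fun k ↦ ‖a k‖ ^ 2) (fun k ↦ ‖b k‖ ^ 2) n := by
  have h := norm_sum_sq_le_card_mul_sum_norm_sq (antidiagonal n) fun p ↦ a p.1 * b p.2
  rw [div_le_iff₀' (by positivity)]
  simpa [cauchyProduct, mul_pow] using h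

lemma norm_sq_cauchyProduct_div_eq_iff (a b : ℕ → ℂ) (n : ℕ) :
    ‖cauchyProduct a b n‖ ^ 2 / (n + 1) =
        cauchyProduct (fun k ↦ ‖a k‖ ^ 2) (fun k ↦ ‖b k‖ ^ 2) n ↔
      ∀ p ∈ antidiagonal n, ∀ q ∈ antidiagonal n,
        a p.1 * b p.2 = a q.1 * b q.2 := by
  have h := norm_sum_sq_eq_card_mul_sum_norm_sq_iff (antidiagonal n) fun p ↦ a p.1 * b p.2
  rw [div_eq_iff (by positivity), mul_comm, ← h]
  simp [cauchyProduct, mul_pow]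

lemma forall_mul_eq_of_add_eq_iff_exists_geometric {K : Type*} [Field K] {a : ℕ → K} :
    (∀ n : ℕ, ∀ p ∈ antidiagonal n, ∀ q ∈ antidiagonal n,
        a p.1 * a p.2 = a q.1 * a q.2) ↔
      ∃ c d : K, ∀ n, a n = c * d ^ n := by
  constructor
  · intro h
    have mul_eq (k l : ℕ) : a k * a l = a 0 * a (k + l) :=
      h (k + l) (k, l) (by simp) (0, k + l) (by simp)
    rcases eq_or_ne (a 0) 0 with h₀ | h₀
    · exact ⟨0, 0, fun n ↦ by simpa [h₀] using mul_eq n n⟩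
    · refine ⟨a 0, a 1 / a 0, fun n ↦ ?_⟩
      induction n with
      | zero => simp
      | succ n ih =>
        calc a (n + 1) = a n * a 1 / a 0 := by rw [mul_eq, mul_div_cancel_left₀ _ h₀]
          _ = a 0 * (a 1 / a 0) ^ (n + 1) := by rw [ih]; ring
  · rintro ⟨c, d, h⟩ n p hp q hq
    have mul_eq {k l : ℕ} (hkl : k + l = n) : a k * a l = c ^ 2 * d ^ n := by
      rw [h, h, ← hkl]; ring
    rw [mul_eq (mem_antidiagonal.1 hp), mul_eq (mem_antidiagonal.1 hq)]

section Parseval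

lemma sum_norm_sq_eq_circleAverage (c : ℕ → ℂ) (s : Finset ℕ) :
    ∑ n ∈ s, ‖c n‖ ^ 2 = circleAverage (fun z ↦ ‖∑ n ∈ s, c n * z ^ n‖ ^ 2) 0 1 := by
  let p : Polynomial ℂ := ∑ n ∈ s, Polynomial.monomial n (c n)
  have coeff_eq (n : ℕ) : p.coeff n = if n ∈ s then c n else 0 := by
    simp [p, Polynomial.finsetSum_coeff, Polynomial.coeff_monomial]
  have eval_eq (z : ℂ) : p.eval z = ∑ n ∈ s, c n * z ^ n := by
    simp [p, Polynomial.eval_finsetSum]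
  have support_subset : p.support ⊆ s := fun n hn ↦ by
    by_contra hns
    simp [coeff_eq, hns] at hn
  calc ∑ n ∈ s, ‖c n‖ ^ 2 = ∑ n ∈ s, ‖p.coeff n‖ ^ 2 :=
        Finset.sum_congr rfl fun n hn ↦ by rw [coeff_eq, if_pos hn]
    _ = ∑ n ∈ p.support, ‖p.coeff n‖ ^ 2 :=
        (Finset.sum_subset support_subset fun n _ hn ↦ by
          simp [Polynomial.notMem_support_iff.1 hn]).symm
    _ = circleAverage (fun z ↦ ‖∑ n ∈ s, c n * z ^ n‖ ^ 2) 0 1 := by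
        simp_rw [p.sum_sq_norm_coeff_eq_circleAverage, eval_eq]

lemma hasSum_norm_sq_circleAverage {c : ℕ → ℂ} (hc : Summable fun n ↦ ‖c n‖) :
    HasSum (fun n ↦ ‖c n‖ ^ 2) (circleAverage (fun z ↦ ‖∑' n, c n * z ^ n‖ ^ 2) 0 1) := by
  have norm_term (θ : ℝ) (n : ℕ) : ‖c n * circleMap 0 1 θ ^ n‖ = ‖c n‖ := by simp
  rw [hasSum_iff_tendsto_nat_of_nonneg fun n ↦ by positivity]
  simp_rw [sum_norm_sq_eq_circleAverage, circleAverage]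
  refine (intervalIntegral.tendsto_integral_filter_of_dominated_convergence
    (fun _ ↦ (∑' n, ‖c n‖) ^ 2) ?_ ?_ (by simp) ?_).const_smul _
  · exact .of_forall fun N ↦ Continuous.aestronglyMeasurable (by fun_prop)
  · refine .of_forall fun N ↦ .of_forall fun θ _ ↦ ?_
    have norm_partial_sum_le :
        ‖∑ n ∈ Finset.range N, c n * circleMap 0 1 θ ^ n‖ ≤ ∑' n, ‖c n‖ :=
      (norm_sum_le_of_le _ fun n _ ↦ (norm_term θ n).le).trans
        (hc.sum_le_tsum _ fun n _ ↦ norm_nonneg _)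
    simpa using pow_le_pow_left₀ (norm_nonneg _) norm_partial_sum_le 2
  · refine .of_forall fun θ _ ↦ ?_
    have summable : Summable fun n ↦ c n * circleMap 0 1 θ ^ n :=
      .of_norm (by simpa only [norm_term] using hc)
    exact (summable.hasSum.tendsto_sum_nat.norm).pow 2

end Parseval

section PolarCoordinates

variable {F : ℂ → ENNReal} {R : ℝ}

lemma lintegral_eq_lintegral_circleMap (hF : Measurable F) :
    ∫⁻ z, F z =
      ∫⁻ r in Ioi 0, ENNReal.ofReal r * ∫⁻ θ in Ioo (-π) π, F (circleMap 0 r θ) := by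
  have polarCoord_symm_eq (p : ℝ × ℝ) : Complex.polarCoord.symm p = circleMap 0 p.1 p.2 := by
    simp [circleMap, Complex.exp_mul_I]
  have measurable_comp : Measurable fun p : ℝ × ℝ ↦ F (circleMap 0 p.1 p.2) :=
    hF.comp (by unfold circleMap; fun_prop)
  simp_rw [← Complex.lintegral_comp_polarCoord_symm F, polarCoord_target, polarCoord_symm_eq,
    smul_eq_mul, Measure.volume_eq_prod]
  rw [setLIntegral_prod _ (by fun_prop)]
  have measurable_circle (r : ℝ) : Measurable fun θ ↦ F (circleMap 0 r θ) :=
    measurable_comp.comp measurable_prodMk_left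
  exact lintegral_congr fun r ↦ lintegral_const_mul (ENNReal.ofReal r) (measurable_circle r)

lemma lintegral_ball_eq_lintegral_circleMap
    (hF : Measurable ((Metric.ball 0 R).indicator F)) :
    ∫⁻ z in Metric.ball 0 R, F z =
      ∫⁻ r in Ioo 0 R, ENNReal.ofReal r * ∫⁻ θ in Ioo (-π) π, F (circleMap 0 r θ) := by
  rw [← lintegral_indicator measurableSet_ball, lintegral_eq_lintegral_circleMap hF,
    ← Iio_inter_Ioi (a := R) (b := 0), ← setLIntegral_indicator measurableSet_Iio]
  refine setLIntegral_congr_fun measurableSet_Ioi fun r (hr : 0 < r) ↦ ?_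
  by_cases hrR : r < R <;> simp [indicator, hrR, abs_of_pos hr]

lemma lintegral_circleMap_eq_circleAverage {h : ℂ → ℝ} {r : ℝ} (h_nonneg : ∀ z, 0 ≤ h z)
    (h_int : CircleIntegrable h 0 r) :
    ∫⁻ θ in Ioo (-π) π, ENNReal.ofReal (h (circleMap 0 r θ)) =
      ENNReal.ofReal (2 * π * circleAverage h 0 r) := by
  have hperiodic : Function.Periodic (fun θ ↦ h (circleMap 0 r θ)) (2 * π) :=
    fun θ ↦ by simp only [periodic_circleMap 0 r θ]
  have hle : -π ≤ π := by linarith [pi_pos]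
  have integral_eq : ∫ θ in -π..π, h (circleMap 0 r θ) = 2 * π * circleAverage h 0 r := by
    have hshift := hperiodic.intervalIntegral_add_eq (-π) 0
    rw [show -π + 2 * π = π by ring, zero_add] at hshift
    rw [hshift, circleAverage, smul_eq_mul, mul_inv_cancel_left₀ two_pi_pos.ne']
  have integrableOn : IntegrableOn (fun θ ↦ h (circleMap 0 r θ)) (Ioo (-π) π) := by
    rw [← intervalIntegrable_iff_integrableOn_Ioo_of_le hle]
    exact hperiodic.intervalIntegrable₀ two_pi_pos.ne' h_int _ _
  rw [← ofReal_integral_eq_lintegral_ofReal integrableOn (.of_forall fun θ ↦ h_nonneg _),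
    ← integral_Ioc_eq_integral_Ioo, ← intervalIntegral.integral_of_le hle, integral_eq]

lemma lintegral_Ioo_pow (hR : 0 ≤ R) (k : ℕ) :
    ∫⁻ r in Ioo 0 R, ENNReal.ofReal (r ^ k) = ENNReal.ofReal (R ^ (k + 1) / (k + 1)) := by
  have integrableOn : IntegrableOn (fun r : ℝ ↦ r ^ k) (Ioo 0 R) := by
    rw [← intervalIntegrable_iff_integrableOn_Ioo_of_le hR]
    exact (continuous_pow k).intervalIntegrable _ _
  have pow_nonneg_ae : ∀ᵐ r ∂volume.restrict (Ioo 0 R), 0 ≤ r ^ k := by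
    filter_upwards [ae_restrict_mem measurableSet_Ioo] with r hr using pow_nonneg hr.1.le k
  rw [← ofReal_integral_eq_lintegral_ofReal integrableOn pow_nonneg_ae,
    ← integral_Ioc_eq_integral_Ioo, ← intervalIntegral.integral_of_le hR, integral_pow]
  simp

end PolarCoordinates

/-- `f` is the sum of the power series `∑ aₙ zⁿ` on the open disc of radius `R` about `0`. This is
the scalar counterpart of `HasFPowerSeriesOnBall`, with the coefficient sequence made explicit. -/
def HasPowerSeriesOnDisc (f : ℂ → ℂ) (a : ℕ → ℂ) (R : ℝ) : Prop :=
  ∀ z ∈ Metric.ball (0 : ℂ) R, HasSum (fun n ↦ a n * z ^ n) (f z)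

namespace HasPowerSeriesOnDisc

variable {f g : ℂ → ℂ} {a b : ℕ → ℂ} {R r : ℝ}

lemma of_differentiableOn (hf : DifferentiableOn ℂ f (Metric.ball 0 R)) :
    HasPowerSeriesOnDisc f (fun n ↦ (n.factorial : ℂ)⁻¹ * iteratedDeriv n f 0) R := by
  intro z hz
  have term_eq (n : ℕ) : (n.factorial : ℂ)⁻¹ • (z - 0) ^ n • iteratedDeriv n f 0 =
      (n.factorial : ℂ)⁻¹ * iteratedDeriv n f 0 * z ^ n := by
    rw [smul_eq_mul, smul_eq_mul, sub_zero]
    ring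
  simpa only [term_eq] using Complex.hasSum_taylorSeries_on_ball hf hz

lemma sub (hf : HasPowerSeriesOnDisc f a R) (hg : HasPowerSeriesOnDisc g b R) :
    HasPowerSeriesOnDisc (f - g) (a - b) R := fun z hz ↦ by
  simpa only [Pi.sub_apply, sub_mul] using (hf z hz).sub (hg z hz)

lemma mul (hf : HasPowerSeriesOnDisc f a R) (hg : HasPowerSeriesOnDisc g b R) :
    HasPowerSeriesOnDisc (f * g) (cauchyProduct a b) R := by
  intro z hz
  have terms_eq : cauchyProduct (fun n ↦ a n * z ^ n) (fun n ↦ b n * z ^ n) =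
      fun n ↦ cauchyProduct a b n * z ^ n := by
    funext n
    simp only [cauchyProduct, Finset.sum_mul]
    refine Finset.sum_congr rfl fun p hp ↦ ?_
    rw [← mem_antidiagonal.1 hp]
    ring
  exact terms_eq ▸ hasSum_cauchyProduct (hf z hz) (hg z hz)
    (hf z hz).summable.norm (hg z hz).summable.norm

lemma summable_norm_mul_pow (hf : HasPowerSeriesOnDisc f a R) (hr₀ : 0 ≤ r) (hr : r < R) :
    Summable fun n ↦ ‖a n‖ * r ^ n := by
  have hmem : (r : ℂ) ∈ Metric.ball 0 R := by simpa [abs_of_nonneg hr₀] using hr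
  simpa [abs_of_nonneg hr₀] using (hf r hmem).summable.norm

lemma continuousOn (hf : HasPowerSeriesOnDisc f a R) : ContinuousOn f (Metric.ball 0 R) := by
  intro z hz
  obtain ⟨r, hzr, hrR⟩ := exists_between (mem_ball_zero_iff.1 hz)
  have hr₀ : 0 ≤ r := (norm_nonneg z).trans hzr.le
  have tsum_continuousOn : ContinuousOn (fun w ↦ ∑' n, a n * w ^ n) (Metric.ball 0 r) := by
    refine continuousOn_tsum (fun n ↦ by fun_prop) (hf.summable_norm_mul_pow hr₀ hrR)
      fun n w hw ↦ ?_
    rw [norm_mul, norm_pow]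
    gcongr
    exact (mem_ball_zero_iff.1 hw).le
  have hcont : ContinuousOn f (Metric.ball 0 r) := tsum_continuousOn.congr fun w hw ↦
    (hf w (Metric.ball_subset_ball hrR.le hw)).tsum_eq.symm
  exact (hcont.continuousAt (Metric.isOpen_ball.mem_nhds
    (mem_ball_zero_iff.2 hzr))).continuousWithinAt

lemma hasSum_circleAverage (hf : HasPowerSeriesOnDisc f a R) (hr₀ : 0 ≤ r) (hr : r < R) :
    HasSum (fun n ↦ ‖a n‖ ^ 2 * r ^ (2 * n)) (circleAverage (fun z ↦ ‖f z‖ ^ 2) 0 r) := by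
  have norm_coeff (n : ℕ) : ‖a n * (r : ℂ) ^ n‖ = ‖a n‖ * r ^ n := by
    simp [abs_of_nonneg hr₀]
  have hparseval := hasSum_norm_sq_circleAverage (c := fun n ↦ a n * (r : ℂ) ^ n)
    (by simpa only [norm_coeff] using hf.summable_norm_mul_pow hr₀ hr)
  have f_eq {z : ℂ} (hz : z ∈ Metric.sphere (0 : ℂ) |1|) :
      ∑' n, a n * (r : ℂ) ^ n * z ^ n = f (r * z) := by
    have hrz : (r : ℂ) * z ∈ Metric.ball 0 R := by
      simpa [abs_of_nonneg hr₀, mem_sphere_zero_iff_norm.1 hz] using hr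
    simpa only [mul_pow, mul_assoc] using (hf _ hrz).tsum_eq
  rw [circleAverage_congr_sphere (f₂ := fun z ↦ ‖f (r * z)‖ ^ 2)
    fun z hz ↦ by simp only [f_eq hz]] at hparseval
  rw [circleAverage_eq_circleAverage_zero_one]
  simpa only [norm_coeff, mul_pow, ← pow_mul', add_zero] using hparseval

lemma coeff_unique (hR : 0 < R) (ha : HasPowerSeriesOnDisc f a R)
    (hb : HasPowerSeriesOnDisc f b R) : a = b := by
  have hsum := (ha.sub hb).hasSum_circleAverage (half_pos hR).le (half_lt_self hR)
  simp only [sub_self, Pi.zero_apply, norm_zero, ne_eq, OfNat.ofNat_ne_zero, not_false_eq_true,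
    zero_pow, circleAverage_const] at hsum
  rw [hasSum_zero_iff_of_nonneg fun n ↦ by positivity] at hsum
  funext n
  simpa [sub_eq_zero, hR.ne'] using congrFun hsum n

lemma measurable_indicator_ofReal_norm_sq (hf : HasPowerSeriesOnDisc f a R) :
    Measurable ((Metric.ball 0 R).indicator fun z ↦ ENNReal.ofReal (‖f z‖ ^ 2)) := by
  classical
  rw [← piecewise_eq_indicator]
  exact (ENNReal.continuous_ofReal.comp_continuousOn (hf.continuousOn.norm.pow 2)
    ).measurable_piecewise continuousOn_const measurableSet_ball

lemma mul_lintegral_circleMap_norm_sq (hf : HasPowerSeriesOnDisc f a R) (hr : r ∈ Ioo 0 R) :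
    ENNReal.ofReal r * ∫⁻ θ in Ioo (-π) π, ENNReal.ofReal (‖f (circleMap 0 r θ)‖ ^ 2) =
      ∑' n, ENNReal.ofReal (2 * π * ‖a n‖ ^ 2) * ENNReal.ofReal (r ^ (2 * n + 1)) := by
  have hr₀ : 0 ≤ r := hr.1.le
  have hsphere : Metric.sphere (0 : ℂ) |r| ⊆ Metric.ball 0 R := by
    rw [abs_of_nonneg hr₀]
    exact Metric.sphere_subset_ball hr.2
  have circleIntegrable : CircleIntegrable (fun z ↦ ‖f z‖ ^ 2) 0 r :=
    ((hf.continuousOn.mono hsphere).norm.pow 2).circleIntegrable'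
  have hsum := (hf.hasSum_circleAverage hr₀ hr.2).mul_left (r * (2 * π))
  rw [lintegral_circleMap_eq_circleAverage (fun z ↦ by positivity) circleIntegrable,
    ← ENNReal.ofReal_mul hr₀, ← mul_assoc, ← hsum.tsum_eq,
    ENNReal.ofReal_tsum_of_nonneg (fun n ↦ by positivity) hsum.summable]
  refine tsum_congr fun n ↦ ?_
  rw [← ENNReal.ofReal_mul (by positivity)]
  ring_nf

lemma lintegral_ball_norm_sq (hf : HasPowerSeriesOnDisc f a R) (hR : 0 ≤ R) :
    ∫⁻ z in Metric.ball 0 R, ENNReal.ofReal (‖f z‖ ^ 2) =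
      ∑' n : ℕ, ENNReal.ofReal (π * (‖a n‖ ^ 2 * R ^ (2 * n + 2) / (n + 1))) := by
  rw [lintegral_ball_eq_lintegral_circleMap hf.measurable_indicator_ofReal_norm_sq,
    setLIntegral_congr_fun measurableSet_Ioo fun r hr ↦ hf.mul_lintegral_circleMap_norm_sq hr,
    lintegral_tsum fun n ↦ by fun_prop]
  refine tsum_congr fun n ↦ ?_
  rw [lintegral_const_mul _ (by fun_prop), lintegral_Ioo_pow hR,
    ← ENNReal.ofReal_mul (by positivity)]
  congr 1
  push_cast
  field_simp
  ring

lemma hasSum_integral_ball_norm_sq (hf : HasPowerSeriesOnDisc f a R) (hR : 0 ≤ R)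
    (ha : Summable fun n : ℕ ↦ ‖a n‖ ^ 2 * R ^ (2 * n + 2) / (n + 1)) :
    HasSum (fun n : ℕ ↦ ‖a n‖ ^ 2 * R ^ (2 * n + 2) / (n + 1))
      ((1 / π) * ∫ z in Metric.ball 0 R, ‖f z‖ ^ 2) := by
  have aestronglyMeasurable : AEStronglyMeasurable (fun z ↦ ‖f z‖ ^ 2)
      (volume.restrict (Metric.ball 0 R)) :=
    (hf.continuousOn.norm.pow 2).aestronglyMeasurable measurableSet_ball
  have integral_eq : ∫ z in Metric.ball 0 R, ‖f z‖ ^ 2 =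
      π * ∑' n : ℕ, ‖a n‖ ^ 2 * R ^ (2 * n + 2) / (n + 1) := by
    rw [integral_eq_lintegral_of_nonneg_ae (.of_forall fun z ↦ by positivity)
      aestronglyMeasurable, hf.lintegral_ball_norm_sq hR,
      ← ENNReal.ofReal_tsum_of_nonneg (fun n ↦ by positivity) (ha.mul_left π),
      ENNReal.toReal_ofReal (tsum_nonneg fun n ↦ by positivity), tsum_mul_left]
  rw [integral_eq, one_div, inv_mul_cancel_left₀ pi_ne_zero]
  exact ha.hasSum

lemma integral_norm_pow_four_eq_iff {S : ℝ} (hf : HasPowerSeriesOnDisc f a 1)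
    (hS : HasSum (fun n ↦ ‖a n‖ ^ 2) S) :
    (1 / π) * ∫ z in Metric.ball 0 1, ‖f z‖ ^ 4 = S ^ 2 ↔
      ∀ n : ℕ, ∀ p ∈ antidiagonal n, ∀ q ∈ antidiagonal n, a p.1 * a p.2 = a q.1 * a q.2 := by
  have hsq : HasSum (cauchyProduct (fun k ↦ ‖a k‖ ^ 2) fun k ↦ ‖a k‖ ^ 2) (S ^ 2) := by
    rw [sq S]
    exact hasSum_cauchyProduct hS hS hS.summable.norm hS.summable.norm
  have summable : Summable fun n : ℕ ↦ ‖cauchyProduct a a n‖ ^ 2 / (n + 1 : ℝ) :=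
    hsq.summable.of_nonneg_of_le (fun n ↦ by positivity) (norm_sq_cauchyProduct_div_le a a)
  have hfour : HasSum (fun n : ℕ ↦ ‖cauchyProduct a a n‖ ^ 2 / (n + 1 : ℝ))
      ((1 / π) * ∫ z in Metric.ball 0 1, ‖f z‖ ^ 4) := by
    have norm_pow_four (z : ℂ) : ‖(f * f) z‖ ^ 2 = ‖f z‖ ^ 4 := by
      rw [Pi.mul_apply, norm_mul]
      ring
    simpa only [one_pow, mul_one, norm_pow_four] using
      (hf.mul hf).hasSum_integral_ball_norm_sq zero_le_one
        (by simpa only [one_pow, mul_one] using summable)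
  rw [hasSum_eq_iff_of_le (norm_sq_cauchyProduct_div_le a a) hfour hsq]
  exact forall_congr' (norm_sq_cauchyProduct_div_eq_iff a a)

end HasPowerSeriesOnDisc

lemma hasPowerSeriesOnDisc_geometric (c₁ : ℂ) {c₂ : ℂ} (hc₂ : ‖c₂‖ < 1) :
    HasPowerSeriesOnDisc (fun z ↦ c₁ / (1 - c₂ * z)) (fun n ↦ c₁ * c₂ ^ n) 1 := by
  intro z hz
  have hlt : ‖c₂ * z‖ < 1 := by
    rw [norm_mul]
    exact mul_lt_one_of_nonneg_of_lt_one_left (norm_nonneg _) hc₂ (mem_ball_zero_iff.1 hz).le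
  simpa only [mul_pow, mul_assoc, div_eq_mul_inv] using
    (hasSum_geometric_of_norm_lt_one hlt).mul_left c₁

lemma norm_lt_one_of_summable_norm_sq_geometric {c d : ℂ} (hc : c ≠ 0)
    (h : Summable fun n : ℕ ↦ ‖c * d ^ n‖ ^ 2) : ‖d‖ < 1 := by
  have norm_sq_eq (n : ℕ) : ‖c * d ^ n‖ ^ 2 = ‖c‖ ^ 2 * (‖d‖ ^ 2) ^ n := by
    rw [norm_mul, norm_pow]
    ring
  simp_rw [norm_sq_eq] at h
  rw [summable_mul_left_iff (by simpa using hc), summable_geometric_iff_norm_lt_one, norm_pow,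
    norm_norm] at h
  exact (sq_lt_one_iff₀ (norm_nonneg _)).1 h

namespace HasPowerSeriesOnDisc

variable {f : ℂ → ℂ} {a : ℕ → ℂ}

lemma exists_geometric_iff (hf : HasPowerSeriesOnDisc f a 1)
    (ha : Summable fun n ↦ ‖a n‖ ^ 2) :
    (∃ c d : ℂ, ∀ n, a n = c * d ^ n) ↔
      ∃ c₁ c₂ : ℂ, ‖c₂‖ < 1 ∧ ∀ z ∈ Metric.ball (0 : ℂ) 1, f z = c₁ / (1 - c₂ * z) := by
  constructor
  · rintro ⟨c, d, had⟩
    obtain ⟨c₂, hc₂, hac₂⟩ : ∃ c₂ : ℂ, ‖c₂‖ < 1 ∧ ∀ n, a n = c * c₂ ^ n := by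
      rcases eq_or_ne c 0 with rfl | hc
      · exact ⟨0, by simp, fun n ↦ by simp [had]⟩
      · simp_rw [had] at ha
        exact ⟨d, norm_lt_one_of_summable_norm_sq_geometric hc ha, had⟩
    obtain rfl : a = fun n ↦ c * c₂ ^ n := funext hac₂
    exact ⟨c, c₂, hc₂, fun z hz ↦ (hf z hz).unique (hasPowerSeriesOnDisc_geometric c hc₂ z hz)⟩
  · rintro ⟨c₁, c₂, hc₂, hfc⟩
    have hgeom : HasPowerSeriesOnDisc f (fun n ↦ c₁ * c₂ ^ n) 1 := fun z hz ↦ by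
      rw [hfc z hz]
      exact hasPowerSeriesOnDisc_geometric c₁ hc₂ z hz
    exact ⟨c₁, c₂, congrFun (hf.coeff_unique one_pos hgeom)⟩

end HasPowerSeriesOnDisc

/-- The `L²` integral mean of `f` over the circle of radius `r` about `0`, whose supremum over
`0 < r < 1` is the `H²` norm of `f`. It is the square root of a `circleAverage`. -/
noncomputable def hardyMean (f : ℂ → ℂ) (r : ℝ) : ℝ :=
  √((1 / (2 * π)) * ∫ φ in (0 : ℝ)..(2 * π), ‖f ((r : ℂ) * Complex.exp (φ * Complex.I))‖ ^ 2)

lemma hardyMean_eq_sqrt_circleAverage (f : ℂ → ℂ) (r : ℝ) :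
    hardyMean f r = √(circleAverage (fun z ↦ ‖f z‖ ^ 2) 0 r) := by
  simp only [hardyMean, circleAverage, circleMap, zero_add, one_div, smul_eq_mul]

lemma HasPowerSeriesOnDisc.hasSum_norm_sq_of_isLUB_hardyMean {f : ℂ → ℂ} {a : ℕ → ℂ} {M : ℝ}
    (hf : HasPowerSeriesOnDisc f a 1)
    (hM : IsLUB (range fun r : Ioo (0 : ℝ) 1 ↦ hardyMean f r) M) :
    HasSum (fun n ↦ ‖a n‖ ^ 2) (M ^ 2) := by
  have : Nonempty (Ioo (0 : ℝ) 1) := nonempty_Ioo_subtype one_pos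
  simp_rw [hardyMean_eq_sqrt_circleAverage] at hM
  exact hasSum_of_isLUB_range_of_hasSum_mul_pow (fun n ↦ by positivity)
    (fun r ↦ hf.hasSum_circleAverage r.2.1.le r.2.2)
    (isLUB_range_of_isLUB_range_sqrt
      (fun r ↦ circleAverage_nonneg_of_nonneg fun z _ ↦ by positivity) hM)

/-- Equality case, for `p = 2`, of the sharp Hardy–Littlewood embedding `H²(𝔻) ↪ A⁴(𝔻)`
(Theorem 5.1 of the paper): equality holds iff `f(z) = c₁/(1 − c₂ z)` with `|c₂| < 1`. -/
theorem stmt_12 (f : ℂ → ℂ)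
    (hf : DifferentiableOn ℂ f (Metric.ball (0 : ℂ) 1))
    (hbdd : BddAbove (Set.range fun r : Set.Ioo (0:ℝ) 1 =>
      Real.sqrt ((1 / (2 * π)) * ∫ φ in (0:ℝ)..(2*π),
        ‖f (((r : ℝ) : ℂ) * Complex.exp (φ * Complex.I))‖ ^ 2)))
    (M : ℝ)
    (hM : M = ⨆ r : Set.Ioo (0:ℝ) 1,
      Real.sqrt ((1 / (2 * π)) * ∫ φ in (0:ℝ)..(2*π),
        ‖f (((r : ℝ) : ℂ) * Complex.exp (φ * Complex.I))‖ ^ 2)) :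
    ((1 / π) * ∫ z in Metric.ball (0 : ℂ) 1, ‖f z‖ ^ 4 = M ^ 4)
      ↔ ∃ c₁ c₂ : ℂ, ‖c₂‖ < 1 ∧ ∀ z ∈ Metric.ball (0 : ℂ) 1, f z = c₁ / (1 - c₂ * z) := by
  obtain ⟨a, hseries⟩ : ∃ a, HasPowerSeriesOnDisc f a 1 := ⟨_, .of_differentiableOn hf⟩
  have : Nonempty (Ioo (0 : ℝ) 1) := nonempty_Ioo_subtype one_pos
  have hLUB : IsLUB (range fun r : Ioo (0 : ℝ) 1 ↦ hardyMean f r) M := hM ▸ isLUB_ciSup hbdd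
  have hsum := hseries.hasSum_norm_sq_of_isLUB_hardyMean hLUB
  rw [show M ^ 4 = (M ^ 2) ^ 2 by ring, hseries.integral_norm_pow_four_eq_iff hsum,
    forall_mul_eq_of_add_eq_iff_exists_geometric, hseries.exists_geometric_iff hsum.summable]
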